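/- Let k ≥ 1 and let ρ ∈ (0,1) satisfy ρ + k/n ≥ 1 or ρ ≥ k/n. Then no deterministic coding scheme Enc : {0,1}^k → {0,1}^n, Dec : {0,1}^n → {0,1}^k ∪ {⊥} with Dec(Enc(m)) = m for all m is a weak (ρ, 3/8)-AMD code: there exist a finite set 𝒵, a random variable Z on 𝒵 jointly distributed with the uniform message M on {0,1}^k (possibly depending on additional randomness independent of M) with H̃∞(Enc(M) | Z) ≥ H∞(Enc(M)) − ρ·n, and a randomized function 𝖠 : 𝒵 → {0,1}^n whose internal randomness is independent of M, such that Pr[Dec(Enc(M) ⊕ 𝖠(Z)) ∉ {M, ⊥}] > 3/8, where ⊕ denotes bitwise XOR. -/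

import Mathlib

open scoped Classical BigOperators

/-- Probability of an event `E` under a finitely supported probability mass function `p`. -/
noncomputable def pr {Ω : Type*} [Fintype Ω] (p : Ω → ℝ) (E : Ω → Prop) : ℝ :=
  ∑ ω : Ω, if E ω then p ω else 0

/-- Min-entropy `H∞(X) = -log₂ max_x Pr[X = x]`. -/
noncomputable def minEntropy {Ω α : Type*} [Fintype Ω] [Fintype α]
    (p : Ω → ℝ) (X : Ω → α) : ℝ :=
  - Real.logb 2 (⨆ x : α, pr p (fun ω => X ω = x))

/-- Conditional (average) min-entropy
`H̃∞(X|Z) = -log₂ Σ_z Pr[Z=z] · max_x Pr[X=x | Z=z] = -log₂ Σ_z max_x Pr[X=x ∧ Z=z]`. -/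
noncomputable def condMinEntropy {Ω α β : Type*} [Fintype Ω] [Fintype α] [Fintype β]
    (p : Ω → ℝ) (X : Ω → α) (Z : Ω → β) : ℝ :=
  - Real.logb 2 (∑ z : β, ⨆ x : α, pr p (fun ω => X ω = x ∧ Z ω = z))

/-- A deterministic binary coding scheme `(Enc, Dec)` is a weak `(ρ, δ)`-AMD code: for
every probability space, every uniform message `M`, every leakage `Z` (jointly
distributed with `M`, possibly depending on additional randomness independent of `M`)
satisfying `H̃∞(Enc(M) | Z) ≥ H∞(Enc(M)) − ρ·n`, and every randomized adversary `A`
whose internal random seed `W` is independent of `(M, Z)`,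
`Pr[Dec(Enc(M) ⊕ A(Z)) ∉ {M, ⊥}] ≤ δ`, where `⊕` is bitwise XOR. -/
def IsWeakAMDBin (k n : ℕ)
    (Enc : (Fin k → Bool) → (Fin n → Bool))
    (Dec : (Fin n → Bool) → Option (Fin k → Bool)) (ρ δ : ℝ) : Prop :=
  ∀ (Ω : Type) [Fintype Ω] (p : Ω → ℝ),
    (∀ ω, 0 ≤ p ω) → (∑ ω : Ω, p ω) = 1 →
    ∀ (M : Ω → (Fin k → Bool)),
      (∀ m : Fin k → Bool, pr p (fun ω => M ω = m) = 1 / (2 : ℝ) ^ k) →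
      ∀ (ZS : Type) [Fintype ZS] (Z : Ω → ZS) (T : Type) [Fintype T] (W : Ω → T),
        (∀ (m : Fin k → Bool) (z : ZS) (w : T),
          pr p (fun ω => (M ω = m ∧ Z ω = z) ∧ W ω = w)
            = pr p (fun ω => M ω = m ∧ Z ω = z) * pr p (fun ω => W ω = w)) →
        condMinEntropy p (fun ω => Enc (M ω)) Z
          ≥ minEntropy p (fun ω => Enc (M ω)) - ρ * n →
        ∀ (A : ZS → T → (Fin n → Bool)),
          pr p (fun ω => Dec (fun i => Bool.xor (Enc (M ω) i) (A (Z ω) (W ω) i))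
              ∉ ({some (M ω), none} : Set (Option (Fin k → Bool)))) ≤ δ

/-!
An offset turns `Enc m` into the codeword of another message exactly when it is one of the
`2 ^ k - 1` differences `Enc m ⊕ Enc m'`, all of them nonzero. By averaging, every set of messages
thus has a nonzero offset that works for at least a fraction `q = (2 ^ k - 1) / (2 ^ n - 1)` of it,
and greedily choosing `2 ^ (n - k)` offsets leaves at most a fraction `exp (-q * 2 ^ (n - k))` of
all messages without a working one; this is below `exp (-1/2)`. Leaking the index of a working
offset takes only `n - k` bits. If `k` bits may be leaked instead, leak the message itself.
-/

section GreedyCovering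

open Finset

variable {α β : Type*} {r : α → β → Prop} {s : Finset α} {t : Finset β} {q : ℝ}

lemma exists_mul_card_le_card_filter (hs : s.Nonempty)
    (hr : ∀ b ∈ t, q * #s ≤ #{a ∈ s | r a b}) : ∃ a ∈ s, q * #t ≤ #{b ∈ t | r a b} := by
  refine exists_le_of_sum_le hs ?_
  calc ∑ _a ∈ s, q * #t = ∑ _b ∈ t, q * #s := by simp only [sum_const, nsmul_eq_mul]; ring
    _ ≤ ∑ b ∈ t, (#{a ∈ s | r a b} : ℝ) := sum_le_sum hr
    _ = ∑ a ∈ s, (#{b ∈ t | r a b} : ℝ) := by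
      exact_mod_cast (sum_card_bipartiteAbove_eq_sum_card_bipartiteBelow r).symm

lemma exists_card_uncovered_le (hs : s.Nonempty)
    (hr : ∀ b ∈ t, q * #s ≤ #{a ∈ s | r a b}) (L : ℕ) :
    ∃ A : Fin L → α, #{b ∈ t | ∀ i, ¬ r (A i) b} ≤ Real.exp (-(q * L)) * #t := by
  induction L with
  | zero => exact ⟨Fin.elim0, by simp⟩
  | succ L ih =>
    obtain ⟨A, hA⟩ := ih
    set u := {b ∈ t | ∀ i, ¬ r (A i) b}
    obtain ⟨a, -, ha⟩ := exists_mul_card_le_card_filter (t := u) hs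
      fun b hb ↦ hr b (mem_filter.mp hb).1
    have huncovered : {b ∈ t | ∀ i, ¬ r (Fin.cons (α := fun _ ↦ α) a A i) b} =
        {b ∈ u | ¬ r a b} := by
      ext b
      simp [u, Fin.forall_fin_succ, and_comm, and_left_comm]
    have hsplit : (#{b ∈ u | r a b} : ℝ) + #{b ∈ u | ¬ r a b} = #u := by
      exact_mod_cast card_filter_add_card_filter_not (s := u) (r a)
    refine ⟨Fin.cons a A, ?_⟩
    calc (#{b ∈ t | ∀ i, ¬ r (Fin.cons (α := fun _ ↦ α) a A i) b} : ℝ)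
        ≤ (1 - q) * #u := by rw [huncovered]; linarith
      _ ≤ Real.exp (-q) * (Real.exp (-(q * L)) * #t) := by
        gcongr
        exact Real.one_sub_le_exp_neg q
      _ = Real.exp (-(q * ↑(L + 1))) * #t := by
        rw [← mul_assoc, ← Real.exp_add]
        push_cast
        ring_nf

end GreedyCovering

section Substitution

open Finset
open scoped symmDiff

/-- The offset `a` is a substitution attack on the message `x` under the encoding `f`: it turns the
codeword of `x` into that of another message. Offsets are added by symmetric difference, which on
`Fin n → Bool` is bitwise XOR. -/
def IsSubstitution {α β : Type*} [BooleanAlgebra β] (f : α → β) (a : β) (x : α) : Prop :=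
  ∃ y ≠ x, f y = f x ∆ a

variable {α β : Type*} [BooleanAlgebra β] {f : α → β} {x y : α}

lemma isSubstitution_symmDiff (h : y ≠ x) : IsSubstitution f (f x ∆ f y) x :=
  ⟨y, h, (symmDiff_symmDiff_cancel_left _ _).symm⟩

variable [Fintype α] [Fintype β]

lemma card_sub_one_le_card_isSubstitution (hf : f.Injective) (x : α) :
    Fintype.card α - 1 ≤ #{a ∈ ({⊥}ᶜ : Finset β) | IsSubstitution f a x} := by
  rw [← card_univ, ← card_erase_of_mem (mem_univ x)]
  refine card_le_card_of_injOn (fun y ↦ f x ∆ f y) (fun y hy ↦ ?_)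
    ((symmDiff_right_injective (f x)).comp hf).injOn
  have hyx : y ≠ x := ne_of_mem_erase hy
  simpa using ⟨hf.ne hyx.symm, isSubstitution_symmDiff hyx⟩

lemma exists_card_isSubstitution_ge [Nontrivial β] (hf : f.Injective) (ι : Type*) [Fintype ι] :
    ∃ A : ι → β,
      (1 - Real.exp (-((Fintype.card α - 1) / (Fintype.card β - 1) * Fintype.card ι))) *
        Fintype.card α ≤ #{x | ∃ i, IsSubstitution f (A i) x} := by
  have hcard : (#({⊥}ᶜ : Finset β) : ℝ) = Fintype.card β - 1 := by
    rw [card_compl, card_singleton, Nat.cast_sub Fintype.card_pos, Nat.cast_one]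
  have hpos : (0 : ℝ) < Fintype.card β - 1 := by
    simpa using Fintype.one_lt_card (α := β)
  have hnonempty : ({⊥}ᶜ : Finset β).Nonempty := by
    rw [← card_pos]
    exact_mod_cast hcard ▸ hpos
  have hdegree : ∀ x ∈ (univ : Finset α),
      ((Fintype.card α - 1) / (Fintype.card β - 1) : ℝ) * #({⊥}ᶜ : Finset β) ≤
        #{a ∈ ({⊥}ᶜ : Finset β) | IsSubstitution f a x} := by
    intro x _
    rw [hcard, div_mul_cancel₀ _ hpos.ne', sub_le_iff_le_add]
    exact_mod_cast Nat.sub_le_iff_le_add.mp (card_sub_one_le_card_isSubstitution hf x)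
  obtain ⟨A, hA⟩ := exists_card_uncovered_le hnonempty hdegree (Fintype.card ι)
  have hsplit : (#{x | ∃ i, IsSubstitution f (A i) x} : ℝ) +
      #{x | ∀ i, ¬ IsSubstitution f (A i) x} = Fintype.card α := by
    simp only [← not_exists]
    exact_mod_cast card_filter_add_card_filter_not (s := (univ : Finset α)) _
  rw [card_univ] at hA
  refine ⟨A ∘ Fintype.equivFin ι, ?_⟩
  simp only [Function.comp_apply, (Fintype.equivFin ι).exists_congr_left, Equiv.apply_symm_apply]
  linarith

end Substitution

section Entropy

variable {Ω α β : Type*} [Fintype Ω] {p : Ω → ℝ} {E F : Ω → Prop}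

lemma pr_const (c : ℝ) (E : Ω → Prop) [DecidablePred E] :
    pr (fun _ ↦ c) E = (Finset.univ.filter E).card * c := by
  simp only [pr, ← Finset.sum_filter, Finset.sum_const, nsmul_eq_mul]

lemma pr_true : pr p (fun _ ↦ True) = ∑ ω, p ω := by
  simp only [pr, if_true]

lemma pr_nonneg (hp : ∀ ω, 0 ≤ p ω) : 0 ≤ pr p E :=
  Finset.sum_nonneg fun ω _ ↦ by split_ifs <;> simp [hp]

lemma pr_mono (hp : ∀ ω, 0 ≤ p ω) (h : ∀ ω, E ω → F ω) : pr p E ≤ pr p F := by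
  simp only [pr, ← Finset.sum_filter]
  exact Finset.sum_le_sum_of_subset_of_nonneg (Finset.monotone_filter_right _ fun ω _ ↦ h ω)
    fun ω _ _ ↦ hp ω

lemma le_pr (hp : ∀ ω, 0 ≤ p ω) {ω : Ω} (hω : E ω) : p ω ≤ pr p E := by
  simp only [pr, ← Finset.sum_filter]
  exact Finset.single_le_sum (fun ω _ ↦ hp ω) (by simpa using hω)

lemma pr_le_iSup_pr [Finite α] (X : Ω → α) (x : α) :
    pr p (fun ω ↦ X ω = x) ≤ ⨆ x, pr p (fun ω ↦ X ω = x) :=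
  le_ciSup (f := fun x ↦ pr p (fun ω ↦ X ω = x)) (Set.finite_range _).bddAbove x

lemma sum_iSup_pr_le [Finite α] [Fintype β] (hp : ∀ ω, 0 ≤ p ω) (X : Ω → α) (Z : Ω → β) :
    ∑ z, ⨆ x, pr p (fun ω ↦ X ω = x ∧ Z ω = z) ≤
      Fintype.card β * ⨆ x, pr p (fun ω ↦ X ω = x) := by
  rw [← nsmul_eq_mul, ← Finset.card_univ, ← Finset.sum_const]
  refine Finset.sum_le_sum fun z _ ↦ Real.iSup_le (fun x ↦ ?_)
    (Real.iSup_nonneg fun _ ↦ pr_nonneg hp)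
  exact (pr_mono hp fun _ h ↦ h.1).trans (pr_le_iSup_pr X x)

lemma sum_iSup_pr_pos [Finite α] [Fintype β] (hp : ∀ ω, 0 ≤ p ω) {ω : Ω} (hω : 0 < p ω)
    (X : Ω → α) (Z : Ω → β) :
    0 < ∑ z, ⨆ x, pr p (fun ω ↦ X ω = x ∧ Z ω = z) := by
  refine Finset.sum_pos' (fun z _ ↦ Real.iSup_nonneg fun x ↦ pr_nonneg hp)
    ⟨Z ω, Finset.mem_univ _, hω.trans_le ?_⟩
  exact (le_pr hp ⟨rfl, rfl⟩).trans <|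
    le_ciSup (f := fun x ↦ pr p (fun ω' ↦ X ω' = x ∧ Z ω' = Z ω))
      (Set.finite_range _).bddAbove (X ω)

lemma minEntropy_sub_logb_card_le_condMinEntropy [Fintype α] [Fintype β] (hp : ∀ ω, 0 ≤ p ω)
    (hsum : 0 < ∑ ω, p ω) (X : Ω → α) (Z : Ω → β) :
    minEntropy p X - Real.logb 2 (Fintype.card β) ≤ condMinEntropy p X Z := by
  obtain ⟨ω, -, hω⟩ := (Finset.sum_pos_iff_of_nonneg fun ω _ ↦ hp ω).mp hsum
  have hcard : (Fintype.card β : ℝ) ≠ 0 := by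
    exact_mod_cast (Fintype.card_pos_iff.mpr ⟨Z ω⟩).ne'
  have hmax : 0 < ⨆ x, pr p (fun ω ↦ X ω = x) :=
    hω.trans_le <| (le_pr (E := fun ω' ↦ X ω' = X ω) hp rfl).trans (pr_le_iSup_pr X (X ω))
  have hlog := Real.logb_le_logb_of_le one_lt_two (sum_iSup_pr_pos hp hω X Z)
    (sum_iSup_pr_le hp X Z)
  rw [Real.logb_mul hcard hmax.ne'] at hlog
  rw [minEntropy, condMinEntropy]
  linarith

end Entropy

section Attacks

open scoped symmDiff

variable {k n : ℕ} {ρ δ : ℝ} {Enc : (Fin k → Bool) → (Fin n → Bool)}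
  {Dec : (Fin n → Bool) → Option (Fin k → Bool)}

lemma injective_of_decode_encode {α β : Type*} {enc : α → β} {dec : β → Option α}
    (hcode : ∀ m, dec (enc m) = some m) : enc.Injective := fun m m' h ↦
  Option.some_injective _ (by rw [← hcode m, ← hcode m', h])

lemma length_le_of_injective (hinj : Enc.Injective) : k ≤ n := by
  have h := Fintype.card_le_of_injective Enc hinj
  simp only [Fintype.card_fun, Fintype.card_bool, Fintype.card_fin] at h
  exact (Nat.pow_le_pow_iff_right one_lt_two).mp h

lemma decode_xor_notMem_of_isSubstitution (hcode : ∀ m, Dec (Enc m) = some m)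
    {a : Fin n → Bool} {m : Fin k → Bool} (h : IsSubstitution Enc a m) :
    Dec (fun i ↦ Bool.xor (Enc m i) (a i)) ∉
      ({some m, none} : Set (Option (Fin k → Bool))) := by
  obtain ⟨m', hne, hm'⟩ := h
  have hxor : (fun i ↦ Bool.xor (Enc m i) (a i)) = Enc m' := by
    ext i
    rw [hm', Pi.symmDiff_apply, Bool.symmDiff_eq_xor]
  simpa [hxor, hcode] using hne

lemma not_isWeakAMDBin_of_lt_card (hcode : ∀ m, Dec (Enc m) = some m)
    {ι : Type} [Fintype ι] [Nonempty ι] (hι : Real.logb 2 (Fintype.card ι) ≤ ρ * n)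
    (A : ι → Fin n → Bool)
    (hA : δ * 2 ^ k < (Finset.univ.filter fun m ↦ ∃ i, IsSubstitution Enc (A i) m).card) :
    ¬ IsWeakAMDBin k n Enc Dec ρ δ := by
  intro hAMD
  let p : (Fin k → Bool) → ℝ := fun _ ↦ 1 / 2 ^ k
  let Z : (Fin k → Bool) → ι := fun m ↦ Classical.epsilon fun i ↦ IsSubstitution Enc (A i) m
  have hnonneg : ∀ m, 0 ≤ p m := fun m ↦ by positivity
  have hsum : ∑ m, p m = 1 := by simp [p]
  have hunif : ∀ m, pr p (fun ω ↦ id ω = m) = 1 / 2 ^ k := fun m ↦ by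
    rw [pr_const, Finset.card_eq_one.mpr ⟨m, by ext; simp⟩, Nat.cast_one, one_mul]
  have hindep : ∀ m i (w : Unit), pr p (fun ω ↦ (id ω = m ∧ Z ω = i) ∧ () = w) =
      pr p (fun ω ↦ id ω = m ∧ Z ω = i) * pr p (fun _ ↦ () = w) := fun m i w ↦ by
    simp only [and_true, pr_true, hsum, mul_one]
  have hent : condMinEntropy p (fun ω ↦ Enc (id ω)) Z ≥
      minEntropy p (fun ω ↦ Enc (id ω)) - ρ * n :=
    (sub_le_sub_left hι _).trans
      (minEntropy_sub_logb_card_le_condMinEntropy hnonneg (by simp [hsum]) _ Z)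
  have hbound := hAMD _ p hnonneg hsum id hunif ι Z Unit (fun _ ↦ ()) hindep hent fun i _ ↦ A i
  have hsucc : pr p (fun m ↦ ∃ i, IsSubstitution Enc (A i) m) ≤ δ :=
    (pr_mono hnonneg fun m hm ↦ decode_xor_notMem_of_isSubstitution hcode
      (Classical.epsilon_spec hm)).trans hbound
  rw [pr_const, mul_one_div, div_le_iff₀ (by positivity)] at hsucc
  exact hsucc.not_gt hA

lemma not_isWeakAMDBin_of_message_length_le (hk : 1 ≤ k) (hcode : ∀ m, Dec (Enc m) = some m)
    (hρ : (k : ℝ) ≤ ρ * n) (hδ : δ < 1) : ¬ IsWeakAMDBin k n Enc Dec ρ δ := by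
  have : Nonempty (Fin k) := ⟨⟨0, hk⟩⟩
  have hall : ∀ m, ∃ m', IsSubstitution Enc (Enc m' ∆ Enc m'ᶜ) m :=
    fun m ↦ ⟨m, isSubstitution_symmDiff compl_ne_self⟩
  refine not_isWeakAMDBin_of_lt_card hcode (ι := Fin k → Bool) (by simpa [Real.logb_pow] using hρ)
    (fun m ↦ Enc m ∆ Enc mᶜ) ?_
  simpa [hall] using hδ

lemma half_lt_two_pow_sub_one_div_mul_two_pow (hk : 1 ≤ k) (hkn : k ≤ n) :
    (1 / 2 : ℝ) < (2 ^ k - 1) / (2 ^ n - 1) * 2 ^ (n - k) := by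
  have hn : (0 : ℝ) < 2 ^ n - 1 := sub_pos.mpr (one_lt_pow₀ one_lt_two (by lia))
  have hsplit : (2 : ℝ) ^ k * 2 ^ (n - k) = 2 ^ n := by rw [← pow_add, Nat.add_sub_cancel' hkn]
  have htwo : (2 : ℝ) ≤ 2 ^ k := le_self_pow₀ one_le_two (by lia)
  have hle : (2 : ℝ) * 2 ^ (n - k) ≤ 2 ^ n := hsplit ▸ by gcongr
  rw [div_mul_eq_mul_div, lt_div_iff₀ hn, sub_mul, hsplit]
  linarith

lemma not_isWeakAMDBin_of_redundancy_le (hk : 1 ≤ k) (hcode : ∀ m, Dec (Enc m) = some m)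
    (hρ : (n : ℝ) - k ≤ ρ * n) (hδ : δ ≤ 1 - Real.exp (-(1 / 2))) :
    ¬ IsWeakAMDBin k n Enc Dec ρ δ := by
  have hinj := injective_of_decode_encode hcode
  have hkn := length_le_of_injective hinj
  have : Nonempty (Fin n) := ⟨⟨0, hk.trans hkn⟩⟩
  obtain ⟨A, hA⟩ := exists_card_isSubstitution_ge hinj (Fin (n - k) → Bool)
  refine not_isWeakAMDBin_of_lt_card hcode ?_ A (lt_of_lt_of_le ?_ hA)
  · simpa [Real.logb_pow, Nat.cast_sub hkn] using hρ
  · have hexp := Real.exp_lt_exp.mpr (neg_lt_neg (half_lt_two_pow_sub_one_div_mul_two_pow hk hkn))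
    simp only [Fintype.card_fun, Fintype.card_bool, Fintype.card_fin, Nat.cast_pow, Nat.cast_ofNat]
    gcongr
    linarith

lemma exp_neg_half_lt_five_eighths : Real.exp (-(1 / 2)) < 5 / 8 := by
  rw [Real.exp_neg, inv_lt_comm₀ (Real.exp_pos _) (by norm_num)]
  have h := Real.quadratic_le_exp_of_nonneg (x := 1 / 2) (by norm_num)
  linarith

end Attacks

theorem stmt15_general (k n : ℕ) (hk : 1 ≤ k) (ρ δ : ℝ)
    (hδ : δ ≤ 1 - Real.exp (-(1 / 2)))
    (hrate : ρ + (k : ℝ) / (n : ℝ) ≥ 1 ∨ ρ ≥ (k : ℝ) / (n : ℝ))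
    (Enc : (Fin k → Bool) → (Fin n → Bool))
    (Dec : (Fin n → Bool) → Option (Fin k → Bool))
    (hcode : ∀ m, Dec (Enc m) = some m) :
    ¬ IsWeakAMDBin k n Enc Dec ρ δ := by
  have hn : (0 : ℝ) < n := by
    exact_mod_cast hk.trans (length_le_of_injective (injective_of_decode_encode hcode))
  rcases hrate with hredundancy | hmessage
  · refine not_isWeakAMDBin_of_redundancy_le hk hcode ?_ hδ
    have h : (1 - ρ) * n ≤ k := (le_div_iff₀ hn).mp (by linarith)
    linarith
  · exact not_isWeakAMDBin_of_message_length_le hk hcode ((div_le_iff₀ hn).mp hmessage)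
      (by linarith [Real.exp_pos (-(1 / 2))])

/-- for `k ≥ 1` and `ρ ∈ (0,1)` with `ρ + k/n ≥ 1` or `ρ ≥ k/n`, no
deterministic binary coding scheme is a weak `(ρ, 3/8)`-AMD code. -/
theorem stmt15 (k n : ℕ) (hk : 1 ≤ k)
    (ρ : ℝ) (hρ0 : 0 < ρ) (hρ1 : ρ < 1)
    (hrate : ρ + (k : ℝ) / (n : ℝ) ≥ 1 ∨ ρ ≥ (k : ℝ) / (n : ℝ))
    (Enc : (Fin k → Bool) → (Fin n → Bool))
    (Dec : (Fin n → Bool) → Option (Fin k → Bool))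
    (hcode : ∀ m, Dec (Enc m) = some m) :
    ¬ IsWeakAMDBin k n Enc Dec ρ (3 / 8) :=
  stmt15_general k n hk ρ _ (by linarith [exp_neg_half_lt_five_eighths]) hrate Enc Dec hcode
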